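/- Let E = EuclideanSpace ℝ (Fin n), let S ⊆ E be nonempty, closed and convex, and let proj : E → E satisfy: for every z ∈ E, proj(z) ∈ S and ‖z − proj(z)‖ ≤ ‖z − y‖ for all y ∈ S. Let P : E →L[ℝ] E be self-adjoint, q ∈ E, and γ > 0 with ‖id − γ·P‖ < 1 (operator norm). Define f(x) = ½⟪x, P x⟫ + ⟪q, x⟫ and T(x) = proj((id − γ·P)x − γ·q). Then there exists a unique x* ∈ S with f(x*) ≤ f(y) for all y ∈ S, and for every initial point x⁰ ∈ E the sequence of iterates l ↦ T^[l](x⁰) converges to x* (Tendsto at infinity). -/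

import Mathlib

open RealInnerProductSpace

/-!
A gradient step followed by a metric projection is a contraction, because the projection onto a
convex set is nonexpansive and `‖id - γ • P‖ < 1`; hence its iterates converge to its fixed point.
At the fixed point `x` the variational inequality of the projection says that the gradient `P x + q`
has nonnegative inner product with `y - x` for every `y ∈ S`. The same norm bound makes `P` positive
definite, so the exact second-order expansion of the objective shows that `x` is a strict minimizer.
-/

open Filter Function Topology

section Contraction

variable {α : Type*} {K : NNReal} {T : α → α} {x : α}

theorem tendsto_iterate_of_isFixedPt [PseudoMetricSpace α]
    (hT : LipschitzWith K T) (hK : K < 1) (hx : IsFixedPt T x) (x₀ : α) :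
    Tendsto (fun l => T^[l] x₀) atTop (𝓝 x) := by
  have hbound (l : ℕ) : dist (T^[l] x₀) x ≤ (K : ℝ) ^ l * dist x₀ x := by
    simpa only [(hx.iterate l).eq, NNReal.coe_pow] using (hT.iterate l).dist_le_mul x₀ x
  refine tendsto_iff_dist_tendsto_zero.2 (squeeze_zero (fun _ => dist_nonneg) hbound ?_)
  simpa only [zero_mul] using
    (tendsto_pow_atTop_nhds_zero_of_lt_one K.coe_nonneg hK).mul_const (dist x₀ x)

theorem exists_isFixedPt_tendsto_iterate_of_isComplete [MetricSpace α] {s : Set α}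
    (hT : ContractingWith K T) (hs : IsComplete s) (hne : s.Nonempty) (hmaps : Set.MapsTo T s s) :
    ∃ x ∈ s, IsFixedPt T x ∧ ∀ x₀, Tendsto (fun l => T^[l] x₀) atTop (𝓝 x) := by
  obtain ⟨a, ha⟩ := hne
  obtain ⟨x, hxs, hx, -⟩ :=
    (hT.restrict hmaps).exists_fixedPoint' hs hmaps ha (edist_ne_top a (T a))
  exact ⟨x, hxs, hx, tendsto_iterate_of_isFixedPt hT.2 hT.1 hx⟩

theorem contractingWith_comp_apply_sub_const {𝕜 E : Type*} [NontriviallyNormedField 𝕜]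
    [NormedAddCommGroup E] [NormedSpace 𝕜 E] {g : E → E} (hg : LipschitzWith 1 g)
    {A : E →L[𝕜] E} (hA : ‖A‖ < 1) (b : E) : ContractingWith ‖A‖₊ fun x => g (A x - b) := by
  have hcomp := hg.comp (A.lipschitz.sub (LipschitzWith.const b))
  rw [one_mul, add_zero] at hcomp
  exact ⟨hA, hcomp⟩

end Contraction

/-- `IsMetricProjection S z p` says that `p` is a point of `S` nearest to `z`. It is a relation,
so that neither existence nor uniqueness of nearest points is presupposed. -/
def IsMetricProjection {F : Type*} [NormedAddCommGroup F] (S : Set F) (z p : F) : Prop :=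
  p ∈ S ∧ ∀ y ∈ S, ‖z - p‖ ≤ ‖z - y‖

section InnerProductSpace

variable {F : Type*} [NormedAddCommGroup F] [InnerProductSpace ℝ F]

namespace IsMetricProjection

variable {S : Set F} {u v p r y : F}

theorem inner_sub_nonpos (hp : IsMetricProjection S u p) (hS : Convex ℝ S) (hy : y ∈ S) :
    ⟪u - p, y - p⟫ ≤ 0 := by
  obtain ⟨hpS, hmin⟩ := hp
  have : Nonempty S := ⟨p, hpS⟩
  have hbdd : BddBelow (Set.range fun w : S => ‖u - w‖) :=
    ⟨0, Set.forall_mem_range.2 fun _ => norm_nonneg _⟩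
  have hinf : ‖u - p‖ = ⨅ w : S, ‖u - w‖ :=
    le_antisymm (le_ciInf fun w => hmin w w.2) (ciInf_le hbdd ⟨p, hpS⟩)
  exact (norm_eq_iInf_iff_real_inner_le_zero hS hpS).1 hinf y hy

theorem norm_sub_sq_le_inner (hp : IsMetricProjection S u p) (hr : IsMetricProjection S v r)
    (hS : Convex ℝ S) : ‖p - r‖ ^ 2 ≤ ⟪u - v, p - r⟫ := by
  have hpr := hp.inner_sub_nonpos hS hr.1
  have hrp := hr.inner_sub_nonpos hS hp.1
  have hsum : ⟪u - p, r - p⟫ + ⟪v - r, p - r⟫ = ‖p - r‖ ^ 2 - ⟪u - v, p - r⟫ := by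
    rw [← real_inner_self_eq_norm_sq]
    simp only [inner_sub_left, inner_sub_right]
    ring
  linarith

theorem norm_sub_le (hp : IsMetricProjection S u p) (hr : IsMetricProjection S v r)
    (hS : Convex ℝ S) : ‖p - r‖ ≤ ‖u - v‖ := by
  have hsq : ‖p - r‖ * ‖p - r‖ ≤ ‖u - v‖ * ‖p - r‖ := by
    rw [← sq]
    exact (hp.norm_sub_sq_le_inner hr hS).trans (real_inner_le_norm _ _)
  rcases (norm_nonneg (p - r)).eq_or_lt with hzero | hpos
  · exact hzero ▸ norm_nonneg _
  · exact le_of_mul_le_mul_right hsq hpos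

theorem inner_nonneg_of_sub_smul {x g : F} {γ : ℝ} (hx : IsMetricProjection S (x - γ • g) x)
    (hS : Convex ℝ S) (hγ : 0 < γ) (hy : y ∈ S) : 0 ≤ ⟪g, y - x⟫ := by
  have hvar := hx.inner_sub_nonpos hS hy
  rw [sub_sub_cancel_left, inner_neg_left, real_inner_smul_left, neg_nonpos] at hvar
  exact nonneg_of_mul_nonneg_right hvar hγ

end IsMetricProjection

theorem lipschitzWith_one_of_isMetricProjection {S : Set F} {proj : F → F} (hS : Convex ℝ S)
    (hproj : ∀ z, IsMetricProjection S z (proj z)) : LipschitzWith 1 proj :=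
  LipschitzWith.of_dist_le_mul fun u v => by
    simpa only [dist_eq_norm, NNReal.coe_one, one_mul] using (hproj u).norm_sub_le (hproj v) hS

theorem one_sub_norm_id_sub_mul_norm_sq_le_inner (A : F →L[ℝ] F) (d : F) :
    (1 - ‖ContinuousLinearMap.id ℝ F - A‖) * ‖d‖ ^ 2 ≤ ⟪d, A d⟫ := by
  have hbound : ‖d‖ ^ 2 - ⟪d, A d⟫ ≤ ‖ContinuousLinearMap.id ℝ F - A‖ * ‖d‖ ^ 2 := calc
    ‖d‖ ^ 2 - ⟪d, A d⟫ = ⟪d, (ContinuousLinearMap.id ℝ F - A) d⟫ := by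
      rw [sub_apply, ContinuousLinearMap.id_apply, inner_sub_right, real_inner_self_eq_norm_sq]
    _ ≤ ‖d‖ * ‖(ContinuousLinearMap.id ℝ F - A) d‖ := real_inner_le_norm _ _
    _ ≤ ‖d‖ * (‖ContinuousLinearMap.id ℝ F - A‖ * ‖d‖) := by
      gcongr
      exact ContinuousLinearMap.le_opNorm _ _
    _ = ‖ContinuousLinearMap.id ℝ F - A‖ * ‖d‖ ^ 2 := by ring
  linarith

theorem inner_apply_self_pos_of_norm_id_sub_smul_lt_one {P : F →L[ℝ] F} {γ : ℝ} (hγ : 0 < γ)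
    (hcontr : ‖ContinuousLinearMap.id ℝ F - γ • P‖ < 1) {d : F} (hd : d ≠ 0) :
    0 < ⟪d, P d⟫ := by
  have hscaled : 0 < γ * ⟪d, P d⟫ := calc
    0 < (1 - ‖ContinuousLinearMap.id ℝ F - γ • P‖) * ‖d‖ ^ 2 :=
      mul_pos (sub_pos.2 hcontr) (pow_pos (norm_pos_iff.2 hd) 2)
    _ ≤ ⟪d, (γ • P) d⟫ := one_sub_norm_id_sub_mul_norm_sq_le_inner _ d
    _ = γ * ⟪d, P d⟫ := by rw [smul_apply, real_inner_smul_right]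
  exact pos_of_mul_pos_right hscaled hγ.le

/-- The objective `½ xᵀPx + qᵀx` of a quadratic program. Its gradient is `P x + q` when `P` is
symmetric. -/
noncomputable def quadraticObjective (P : F →ₗ[ℝ] F) (q x : F) : ℝ :=
  (1 / 2) * ⟪x, P x⟫ + ⟪q, x⟫

theorem quadraticObjective_sub {P : F →ₗ[ℝ] F} (hP : P.IsSymmetric) (q x y : F) :
    quadraticObjective P q y - quadraticObjective P q x =
      ⟪P x + q, y - x⟫ + (1 / 2) * ⟪y - x, P (y - x)⟫ := by
  have hcross : ⟪y, P x⟫ = ⟪x, P y⟫ := by rw [real_inner_comm, hP]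
  simp only [quadraticObjective, inner_sub_left, inner_sub_right, inner_add_left, map_sub, hP x,
    hcross]
  ring

theorem quadraticObjective_lt_of_inner_nonneg {P : F →ₗ[ℝ] F} (hP : P.IsSymmetric) {q x y : F}
    (hgrad : 0 ≤ ⟪P x + q, y - x⟫) (hpos : 0 < ⟪y - x, P (y - x)⟫) :
    quadraticObjective P q x < quadraticObjective P q y := by
  linarith [quadraticObjective_sub hP q x y]

/-- One projected gradient step for `quadraticObjective P q` with step size `γ`: the gradient step
`x - γ • (P x + q)`, written as `(id - γ • P) x - γ • q`, followed by the map `proj`. -/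
def projGradStep (proj : F → F) (P : F →L[ℝ] F) (q : F) (γ : ℝ) (x : F) : F :=
  proj ((ContinuousLinearMap.id ℝ F - γ • P) x - γ • q)

variable {S : Set F} {proj : F → F} {P : F →L[ℝ] F} {q x y : F} {γ : ℝ}

theorem inner_gradient_nonneg_of_isFixedPt_projGradStep (hS : Convex ℝ S)
    (hproj : ∀ z, IsMetricProjection S z (proj z)) (hγ : 0 < γ)
    (hx : IsFixedPt (projGradStep proj P q γ) x) (hy : y ∈ S) : 0 ≤ ⟪P x + q, y - x⟫ := by
  have hstep : (ContinuousLinearMap.id ℝ F - γ • P) x - γ • q = x - γ • (P x + q) := by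
    rw [sub_apply, ContinuousLinearMap.id_apply, smul_apply, smul_add, sub_sub]
  have hproj_x : IsMetricProjection S (x - γ • (P x + q)) x := by
    have hproj_step := hproj ((ContinuousLinearMap.id ℝ F - γ • P) x - γ • q)
    rwa [show proj _ = x from hx, hstep] at hproj_step
  exact hproj_x.inner_nonneg_of_sub_smul hS hγ hy

theorem quadraticObjective_lt_of_isFixedPt_projGradStep (hS : Convex ℝ S)
    (hproj : ∀ z, IsMetricProjection S z (proj z)) (hP : (P : F →ₗ[ℝ] F).IsSymmetric) (hγ : 0 < γ)
    (hcontr : ‖ContinuousLinearMap.id ℝ F - γ • P‖ < 1)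
    (hx : IsFixedPt (projGradStep proj P q γ) x) (hy : y ∈ S) (hne : y ≠ x) :
    quadraticObjective P q x < quadraticObjective P q y :=
  quadraticObjective_lt_of_inner_nonneg hP
    (inner_gradient_nonneg_of_isFixedPt_projGradStep hS hproj hγ hx hy)
    (inner_apply_self_pos_of_norm_id_sub_smul_lt_one hγ hcontr (sub_ne_zero.2 hne))

end InnerProductSpace

theorem pgd_converges_to_unique_minimizer_general {F : Type*} [NormedAddCommGroup F]
    [InnerProductSpace ℝ F] {S : Set F} (hcomplete : IsComplete S) (hS : Convex ℝ S)
    {proj : F → F} (hproj : ∀ z, IsMetricProjection S z (proj z)) {P : F →L[ℝ] F}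
    (hP : (P : F →ₗ[ℝ] F).IsSymmetric) (q : F) {γ : ℝ} (hγ : 0 < γ)
    (hcontr : ‖ContinuousLinearMap.id ℝ F - γ • P‖ < 1) :
    ∃ x : F,
      (x ∈ S ∧ ∀ y ∈ S, quadraticObjective P q x ≤ quadraticObjective P q y) ∧
      (∀ x' ∈ S, (∀ y ∈ S, quadraticObjective P q x' ≤ quadraticObjective P q y) → x' = x) ∧
      ∀ x₀ : F, Tendsto (fun l => (projGradStep proj P q γ)^[l] x₀) atTop (𝓝 x) := by
  have hT : ContractingWith _ (projGradStep proj P q γ) :=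
    contractingWith_comp_apply_sub_const (lipschitzWith_one_of_isMetricProjection hS hproj) hcontr _
  obtain ⟨x, hxS, hx, hlim⟩ := exists_isFixedPt_tendsto_iterate_of_isComplete hT hcomplete
    ⟨proj 0, (hproj 0).1⟩ fun _ _ => (hproj _).1
  have hstrict {y : F} (hy : y ∈ S) (hne : y ≠ x) :
      quadraticObjective P q x < quadraticObjective P q y :=
    quadraticObjective_lt_of_isFixedPt_projGradStep hS hproj hP hγ hcontr hx hy hne
  refine ⟨x, ⟨hxS, fun y hy => ?_⟩, fun x' hx' hmin => ?_, hlim⟩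
  · rcases eq_or_ne y x with rfl | hne
    · exact le_rfl
    · exact (hstrict hy hne).le
  · by_contra hne
    exact (hstrict hx' hne).not_ge (hmin x hxS)

theorem pgd_converges_to_unique_minimizer (n : ℕ)
    (S : Set (EuclideanSpace ℝ (Fin n))) (hne : S.Nonempty)
    (hclosed : IsClosed S) (hconv : Convex ℝ S)
    (proj : EuclideanSpace ℝ (Fin n) → EuclideanSpace ℝ (Fin n))
    (hproj : ∀ z : EuclideanSpace ℝ (Fin n),
      proj z ∈ S ∧ ∀ y ∈ S, ‖z - proj z‖ ≤ ‖z - y‖)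
    (P : EuclideanSpace ℝ (Fin n) →L[ℝ] EuclideanSpace ℝ (Fin n))
    (hsym : ∀ x y : EuclideanSpace ℝ (Fin n), ⟪P x, y⟫ = ⟪x, P y⟫)
    (q : EuclideanSpace ℝ (Fin n)) (γ : ℝ) (hγ : 0 < γ)
    (hcontr : ‖ContinuousLinearMap.id ℝ (EuclideanSpace ℝ (Fin n)) - γ • P‖ < 1) :
    let f : EuclideanSpace ℝ (Fin n) → ℝ := fun x => (1 / 2) * ⟪x, P x⟫ + ⟪q, x⟫
    let T : EuclideanSpace ℝ (Fin n) → EuclideanSpace ℝ (Fin n) :=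
      fun x => proj ((ContinuousLinearMap.id ℝ (EuclideanSpace ℝ (Fin n)) - γ • P) x - γ • q)
    ∃ xstar : EuclideanSpace ℝ (Fin n),
      (xstar ∈ S ∧ ∀ y ∈ S, f xstar ≤ f y) ∧
      (∀ x' : EuclideanSpace ℝ (Fin n), x' ∈ S → (∀ y ∈ S, f x' ≤ f y) → x' = xstar) ∧
      ∀ x0 : EuclideanSpace ℝ (Fin n),
        Filter.Tendsto (fun l => T^[l] x0) Filter.atTop (nhds xstar) := by
  exact pgd_converges_to_unique_minimizer_general hclosed.isComplete hconv hproj hsym q hγ hcontr
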